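/- Let R be a commutative noetherian ring and let S₁ and S₂ be classes of finitely generated R-modules, each closed under isomorphism, containing the zero module, and closed under submodules, quotient modules, and extensions among finitely generated modules. Then the class of finitely generated R-modules M admitting a submodule N with N ∈ S₁ and M/N ∈ S₂ is also closed under isomorphism, submodules, quotient modules, and extensions among finitely generated modules; in particular, it is closed under extensions: if 0 → L → M → N → 0 is exact with L and N finitely generated and belonging to this class, then M belongs to it. -/

import Mathlib

/-!
Call a module `S₁`-torsion-free if its only submodule in `S₁` is zero. A finitely generated module
`M` over a noetherian ring has a maximal submodule `D` in `S₁`, and then `M ⧸ D` is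
`S₁`-torsion-free. The heart of the matter is `IsFGSerreClass.mem_of_torsionFree`: if `X` is
`S₁`-torsion-free and has a submodule `Y ∈ S₂` with `X ⧸ Y ∈ S₁`, then `X ∈ S₂`. Indeed, let
`a₁, …, aᵣ` generate the annihilator `I` of `X ⧸ Y`. Then `x ↦ (aᵢ x)ᵢ` maps `X` to `Yʳ`, and an
element `x` of its kernel is killed by `I`. Since `R ⧸ I` embeds in a finite power of `X ⧸ Y`, the
cyclic module `R x` lies in `S₁`, so `x = 0`. Hence `X` embeds in `Yʳ ∈ S₂`.

For an extension `0 → L → M → N → 0` with `L₁ ≤ L` and `N₁ ≤ N` witnessing membership, choose `D`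
as above. The image `L'` of `L` in `M ⧸ D` is a quotient of `L ⧸ L₁`, as the image of `L₁` vanishes
by torsion-freeness. The image `T` of the preimage of `N₁` contains `L'` with `T ⧸ L'` a quotient
of `N₁`, so `T ∈ S₂` by the lemma, and `(M ⧸ D) ⧸ T` is a quotient of `N ⧸ N₁`. So `M ⧸ D ∈ S₂`.

All closure properties under isomorphism, submodules and quotients are handled at once through
subquotients, presented as in `exists_surjective_range`.
-/

universe u v

/-- A Serre class of finitely generated `R`-modules: a class of finitely generated modules,
closed under isomorphism, containing the zero module, and closed under submodules, quotient
modules, and extensions among finitely generated modules. -/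
structure IsFGSerreClass (R : Type u) [CommRing R]
    (S : ∀ (M : Type v) [AddCommGroup M] [Module R M], Prop) : Prop where
  finite : ∀ (M : Type v) [AddCommGroup M] [Module R M], S M → Module.Finite R M
  isoClosed : ∀ (M N : Type v) [AddCommGroup M] [Module R M] [AddCommGroup N] [Module R N],
      (M ≃ₗ[R] N) → S M → S N
  zeroMem : ∀ (M : Type v) [AddCommGroup M] [Module R M], Subsingleton M → S M
  subClosed : ∀ (M : Type v) [AddCommGroup M] [Module R M] (N : Submodule R M), S M → S N
  quotClosed : ∀ (M : Type v) [AddCommGroup M] [Module R M] (N : Submodule R M), S M → S (M ⧸ N)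
  extClosed : ∀ (L M N : Type v) [AddCommGroup L] [Module R L] [AddCommGroup M] [Module R M]
      [AddCommGroup N] [Module R N] (f : L →ₗ[R] M) (g : M →ₗ[R] N),
      Function.Injective f → Function.Surjective g →
      LinearMap.range f = LinearMap.ker g →
      Module.Finite R L → Module.Finite R N → S L → S N → S M

/-- The extension class of `S₁` by `S₂` within finitely generated modules: finitely generated
modules `M` admitting a submodule `N ∈ S₁` with `M/N ∈ S₂`. -/
def FGExtensionClass {R : Type u} [CommRing R]
    (S₁ S₂ : ∀ (M : Type v) [AddCommGroup M] [Module R M], Prop)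
    (M : Type v) [AddCommGroup M] [Module R M] : Prop :=
  Module.Finite R M ∧ ∃ N : Submodule R M, S₁ N ∧ S₂ (M ⧸ N)

/-- A module `Z` is a subquotient of `B` as soon as some `A` maps to `B` by `u` and onto `Z` by
`w` with `ker u ≤ ker w`. The module `A` may live in any universe; in particular `A = R` is allowed,
which is how cyclic modules are treated. -/
theorem exists_surjective_range {R A B Z : Type*} [CommRing R]
    [AddCommGroup A] [Module R A] [AddCommGroup B] [Module R B] [AddCommGroup Z] [Module R Z]
    (u : A →ₗ[R] B) (w : A →ₗ[R] Z) (hw : Function.Surjective w)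
    (h : LinearMap.ker u ≤ LinearMap.ker w) :
    ∃ t : LinearMap.range u →ₗ[R] Z, Function.Surjective t := by
  refine ⟨(LinearMap.ker u).liftQ w h ∘ₗ u.quotKerEquivRange.symm.toLinearMap, ?_⟩
  rw [LinearMap.coe_comp]
  refine Function.Surjective.comp ?_ u.quotKerEquivRange.symm.surjective
  intro z
  obtain ⟨a, rfl⟩ := hw z
  exact ⟨Submodule.Quotient.mk a, by simp⟩

namespace IsFGSerreClass

variable {R : Type u} [CommRing R] {S S₁ S₂ : ∀ (M : Type v) [AddCommGroup M] [Module R M], Prop}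

theorem of_subquotient (hS : IsFGSerreClass R S) {A : Type*} {B Z : Type v}
    [AddCommGroup A] [Module R A] [AddCommGroup B] [Module R B] [AddCommGroup Z] [Module R Z]
    (u : A →ₗ[R] B) (w : A →ₗ[R] Z) (hw : Function.Surjective w)
    (h : LinearMap.ker u ≤ LinearMap.ker w) (hB : S B) : S Z := by
  obtain ⟨t, ht⟩ := exists_surjective_range u w hw h
  exact hS.isoClosed _ _ (t.quotKerEquivOfSurjective ht)
    (hS.quotClosed _ (LinearMap.ker t) (hS.subClosed _ (LinearMap.range u) hB))

theorem of_injective (hS : IsFGSerreClass R S) {A B : Type v}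
    [AddCommGroup A] [Module R A] [AddCommGroup B] [Module R B]
    (u : A →ₗ[R] B) (hu : Function.Injective u) (hB : S B) : S A :=
  hS.of_subquotient u LinearMap.id Function.surjective_id
    (by rw [LinearMap.ker_eq_bot.2 hu]; exact bot_le) hB

/-- Extension closure for a sequence that is only exact in the middle. -/
theorem of_exact (hS : IsFGSerreClass R S) {L M N : Type v}
    [AddCommGroup L] [Module R L] [AddCommGroup M] [Module R M] [AddCommGroup N] [Module R N]
    (f : L →ₗ[R] M) (g : M →ₗ[R] N) (h : LinearMap.ker g ≤ LinearMap.range f)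
    (hL : S L) (hN : S N) : S M := by
  have hr : S (LinearMap.range f) :=
    hS.of_subquotient LinearMap.id f.rangeRestrict f.surjective_rangeRestrict (by simp) hL
  have hk : S (LinearMap.ker g) :=
    hS.of_injective (Submodule.inclusion h) (Submodule.inclusion_injective h) hr
  have hq : S (LinearMap.range g) := hS.subClosed _ _ hN
  exact hS.extClosed _ _ _ (LinearMap.ker g).subtype g.rangeRestrict
    (Submodule.injective_subtype _) g.surjective_rangeRestrict (by simp)
    (hS.finite _ hk) (hS.finite _ hq) hk hq

theorem pi (hS : IsFGSerreClass R S) {M : Type v} [AddCommGroup M] [Module R M] (hM : S M)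
    (n : ℕ) : S (Fin n → M) := by
  induction n with
  | zero => exact hS.zeroMem _ inferInstance
  | succ n ih =>
    refine hS.of_exact (LinearMap.single R (fun _ : Fin (n + 1) => M) 0)
      (LinearMap.funLeft R M Fin.succ) ?_ hM ih
    intro x hx
    refine ⟨x 0, ?_⟩
    ext i
    refine Fin.cases ?_ (fun j => ?_) i
    · simp
    · have := congrFun (LinearMap.mem_ker.1 hx) j
      simpa [LinearMap.funLeft_apply] using this.symm

/-- If `Q` is in a Serre class, then so is every cyclic module killed by the annihilator of `Q`:
for generators `q₁, …, qₙ` of `Q` it is a quotient of `R (q₁, …, qₙ) ≤ Qⁿ`. -/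
theorem span_singleton (hS : IsFGSerreClass R S) {Q X : Type v}
    [AddCommGroup Q] [Module R Q] [AddCommGroup X] [Module R X] (hQ : S Q) (x : X)
    (h : ∀ a ∈ Module.annihilator R Q, a • x = 0) : S (R ∙ x) := by
  have := hS.finite _ hQ
  obtain ⟨n, q, hq⟩ := Module.Finite.exists_fin (R := R) (M := Q)
  have hx : S (LinearMap.range (LinearMap.toSpanSingleton R X x)) := by
    refine hS.of_subquotient (LinearMap.toSpanSingleton R (Fin n → Q) q)
      (LinearMap.toSpanSingleton R X x).rangeRestrict (LinearMap.surjective_rangeRestrict _) ?_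
      (hS.pi hQ n)
    intro a ha
    rw [LinearMap.ker_rangeRestrict]
    refine h a (Module.mem_annihilator.2 fun m => ?_)
    have hm : m ∈ Submodule.span R (Set.range q) := hq ▸ Submodule.mem_top
    induction hm using Submodule.span_induction with
    | mem y hy =>
      obtain ⟨i, rfl⟩ := hy
      exact congrFun (LinearMap.mem_ker.1 ha) i
    | zero => simp
    | add y z _ _ hy hz => rw [smul_add, hy, hz, add_zero]
    | smul b y _ hy => rw [smul_comm, hy, smul_zero]
  rwa [LinearMap.range_toSpanSingleton] at hx

theorem mem_of_torsionFree [IsNoetherianRing R]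
    (h₁ : IsFGSerreClass R S₁) (h₂ : IsFGSerreClass R S₂)
    {X : Type v} [AddCommGroup X] [Module R X] (hX : ∀ E : Submodule R X, S₁ E → E = ⊥)
    (Y : Submodule R X) (hY : S₂ Y) (hQ : S₁ (X ⧸ Y)) : S₂ X := by
  obtain ⟨r, a, ha⟩ := Submodule.fg_iff_exists_fin_generating_family.1
    (IsNoetherian.noetherian (Module.annihilator R (X ⧸ Y)))
  have haY : ∀ i (x : X), a i • x ∈ Y := fun i x => by
    have hi : a i ∈ Module.annihilator R (X ⧸ Y) := ha ▸ Submodule.subset_span ⟨i, rfl⟩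
    have := Module.mem_annihilator.1 hi (Submodule.Quotient.mk x)
    rwa [← Submodule.Quotient.mk_smul, Submodule.Quotient.mk_eq_zero] at this
  let φ : X →ₗ[R] (Fin r → Y) := LinearMap.pi fun i =>
    (LinearMap.lsmul R X (a i)).codRestrict Y (haY i)
  refine h₂.of_injective φ (LinearMap.ker_eq_bot.1 ?_) (h₂.pi hY r)
  rw [eq_bot_iff]
  intro x hx
  have hx0 : ∀ i, a i • x = 0 := fun i =>
    congrArg Subtype.val (congrFun (LinearMap.mem_ker.1 hx) i)
  have hbot := hX _ (h₁.span_singleton hQ x fun b hb => by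
    rw [← ha] at hb
    induction hb using Submodule.span_induction with
    | mem y hy =>
      obtain ⟨i, rfl⟩ := hy
      exact hx0 i
    | zero => simp
    | add y z _ _ hy hz => rw [add_smul, hy, hz, add_zero]
    | smul c y _ hy => rw [smul_assoc, hy, smul_zero])
  exact hbot ▸ Submodule.mem_span_singleton_self x

theorem exists_torsionFree_quotient [IsNoetherianRing R] (hS : IsFGSerreClass R S)
    (M : Type v) [AddCommGroup M] [Module R M] [Module.Finite R M] :
    ∃ D : Submodule R M, S D ∧ ∀ E : Submodule R (M ⧸ D), S E → E = ⊥ := by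
  obtain ⟨D, hD, hmax⟩ := set_has_maximal_iff_noetherian.2
    (inferInstance : IsNoetherian R M) {D : Submodule R M | S D} ⟨⊥, hS.zeroMem _ inferInstance⟩
  refine ⟨D, hD, fun E hE => ?_⟩
  have hle : D ≤ E.comap D.mkQ := D.le_comap_mkQ E
  have hC : S (E.comap D.mkQ) := by
    refine hS.of_exact (Submodule.inclusion hle) (D.mkQ.restrict (fun _ hx => hx)) ?_ hD hE
    intro x hx
    have hx' : D.mkQ x = 0 := congrArg Subtype.val (LinearMap.mem_ker.1 hx)
    exact ⟨⟨x, by simpa using hx'⟩, rfl⟩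
  have heq : D = E.comap D.mkQ := hle.eq_of_not_lt (hmax _ hC)
  rw [eq_bot_iff]
  intro e he
  obtain ⟨m, rfl⟩ := D.mkQ_surjective e
  have : m ∈ D := heq ▸ he
  simpa using this

end IsFGSerreClass

/-- The witness in the subquotient `Z` is the image under `w` of the preimage under `u` of the
witness in `B`. -/
theorem FGExtensionClass.of_subquotient {R : Type u} [CommRing R] [IsNoetherianRing R]
    {S₁ S₂ : ∀ (M : Type v) [AddCommGroup M] [Module R M], Prop}
    (h₁ : IsFGSerreClass R S₁) (h₂ : IsFGSerreClass R S₂) {A : Type*} {B Z : Type v}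
    [AddCommGroup A] [Module R A] [AddCommGroup B] [Module R B] [AddCommGroup Z] [Module R Z]
    (u : A →ₗ[R] B) (w : A →ₗ[R] Z) (hw : Function.Surjective w)
    (h : LinearMap.ker u ≤ LinearMap.ker w) (hB : FGExtensionClass S₁ S₂ B) :
    FGExtensionClass S₁ S₂ Z := by
  obtain ⟨hfin, N, hN, hQ⟩ := hB
  obtain ⟨t, ht⟩ := exists_surjective_range u w hw h
  refine ⟨Module.Finite.of_surjective t ht, (N.comap u).map w, ?_, ?_⟩
  · refine h₁.of_subquotient (u.restrict (fun _ hx => hx) : N.comap u →ₗ[R] N)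
      (w.restrict fun x hx => Submodule.mem_map_of_mem hx) ?_ ?_ hN
    · rintro ⟨_, x, hx, rfl⟩
      exact ⟨⟨x, hx⟩, rfl⟩
    · intro x hx
      exact Subtype.ext (h (congrArg Subtype.val (LinearMap.mem_ker.1 hx)))
  · refine h₂.of_subquotient (N.mkQ ∘ₗ u) (((N.comap u).map w).mkQ ∘ₗ w)
      ((Submodule.mkQ_surjective _).comp hw) ?_ hQ
    intro x hx
    have hxN : u x ∈ N := by simpa using hx
    simpa using (⟨x, hxN, rfl⟩ : ∃ y, u y ∈ N ∧ w y = w x)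

/-- For Serre classes `S₁` and `S₂` of finitely generated modules over a noetherian ring, the
extension class `(S₁, S₂)` is again a Serre class of finitely generated modules; in particular
it is closed under extensions among finitely generated modules. -/
theorem fgExtensionClass_isFGSerreClass
    {R : Type u} [CommRing R] [IsNoetherianRing R]
    (S₁ S₂ : ∀ (M : Type v) [AddCommGroup M] [Module R M], Prop)
    (h₁ : IsFGSerreClass R S₁) (h₂ : IsFGSerreClass R S₂) :
    IsFGSerreClass R (FGExtensionClass S₁ S₂) where
  finite M _ _ h := h.1
  isoClosed M N _ _ _ _ e h :=
    .of_subquotient h₁ h₂ LinearMap.id e.toLinearMap e.surjective (by simp) h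
  zeroMem M _ _ hM :=
    ⟨inferInstance, ⊥, h₁.zeroMem _ inferInstance,
      h₂.zeroMem _ (Submodule.mkQ_surjective _).subsingleton⟩
  subClosed M _ _ N h :=
    .of_subquotient h₁ h₂ N.subtype LinearMap.id Function.surjective_id (by simp) h
  quotClosed M _ _ N h :=
    .of_subquotient h₁ h₂ LinearMap.id N.mkQ N.mkQ_surjective (by simp) h
  extClosed L M N _ _ _ _ _ _ f g hf hg hfg hL hN hSL hSN := by
    obtain ⟨-, L₁, hL₁, hLQ⟩ := hSL
    obtain ⟨-, N₁, hN₁, hNQ⟩ := hSN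
    have hM : Module.Finite R M := Module.Finite.of_exact
      (f := f) (g := g) (LinearMap.exact_iff.2 hfg.symm) hg
    obtain ⟨D, hD, htf⟩ := h₁.exists_torsionFree_quotient M
    refine ⟨hM, D, hD, ?_⟩
    set p := D.mkQ with hp
    have hL₁0 : L₁.map (p ∘ₗ f) = ⊥ := htf _ <| by
      refine h₁.of_subquotient LinearMap.id
        ((p ∘ₗ f).restrict fun x hx => Submodule.mem_map_of_mem hx :
          L₁ →ₗ[R] L₁.map (p ∘ₗ f)) ?_ (by simp) hL₁
      rintro ⟨_, x, hx, rfl⟩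
      exact ⟨⟨x, hx⟩, rfl⟩
    have hL' : S₂ (LinearMap.range (p ∘ₗ f)) := by
      refine h₂.of_subquotient L₁.mkQ (p ∘ₗ f).rangeRestrict
        (LinearMap.surjective_rangeRestrict _) ?_ hLQ
      rw [Submodule.ker_mkQ, LinearMap.ker_rangeRestrict]
      exact LinearMap.le_ker_iff_map.2 hL₁0
    let T := (N₁.comap g).map p
    let Y := (LinearMap.range (p ∘ₗ f)).comap T.subtype
    have hT : S₂ T := by
      refine h₁.mem_of_torsionFree h₂ (fun E hE => ?_) Y ?_ ?_
      · have hE' := htf (E.map T.subtype) (h₁.isoClosed _ _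
          (E.equivMapOfInjective T.subtype T.injective_subtype) hE)
        exact Submodule.map_injective_of_injective T.injective_subtype
          (by rw [hE', Submodule.map_bot])
      · exact h₂.of_injective
          (T.subtype.restrict (fun _ hx => hx) : Y →ₗ[R] LinearMap.range (p ∘ₗ f))
          (fun a b hab => by
            have h := congrArg Subtype.val hab
            exact Subtype.ext (Subtype.ext h)) hL'
      · let q : N₁.comap g →ₗ[R] T := p.restrict fun x hx => Submodule.mem_map_of_mem hx
        have hq : Function.Surjective q := by
          rintro ⟨_, x, hx, rfl⟩
          exact ⟨⟨x, hx⟩, rfl⟩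
        refine h₁.of_subquotient (g.restrict (fun _ hx => hx) : N₁.comap g →ₗ[R] N₁)
          (Y.mkQ ∘ₗ q) (Y.mkQ_surjective.comp hq) ?_ hN₁
        intro x hx
        have hgx : (x : M) ∈ LinearMap.ker g := congrArg Subtype.val (LinearMap.mem_ker.1 hx)
        rw [← hfg] at hgx
        obtain ⟨l, hl⟩ := hgx
        have hxY : q x ∈ Y := ⟨l, congrArg p hl⟩
        simpa using hxY
    have hTQ : S₂ ((M ⧸ D) ⧸ T) := by
      refine h₂.of_subquotient (N₁.mkQ ∘ₗ g) (T.mkQ ∘ₗ p)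
        (T.mkQ_surjective.comp D.mkQ_surjective) ?_ hNQ
      intro x hx
      have hxN : g x ∈ N₁ := by simpa using hx
      have hxT : p x ∈ T := ⟨x, hxN, rfl⟩
      simpa using hxT
    exact h₂.of_exact T.subtype T.mkQ (by simp) hT hTQ
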